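/- Let Q be a real n×n matrix and suppose there exist constants C ≥ 0 and 0 ≤ r < 1 such that ‖Q^k‖ ≤ C·r^k for all k ≥ 1 (e.g. Q has spectral radius less than 1). Then det(I − Q) > 0, the series ∑_{k=1}^∞ trace(Q^k)/k converges, and ∑_{k=1}^∞ trace(Q^k)/k = −log det(I − Q) = log det((I − Q)⁻¹). (This identity expresses that the total mass of the rooted loop measure m̃(l) = p(l)/|l| on loops in A equals log det G_A, where for a transient chain killed outside A one has ∑_{loops l of length k} p(l) = trace(P_A^k) and G_A = (I − P_A)⁻¹.) -/

import Mathlib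

open Matrix

attribute [local instance] Matrix.linftyOpNormedRing

section

attribute [local instance] Matrix.linftyOpNormedAlgebra

/-- A special case of Jacobi's formula, at a point where `1 - t • Q` has right inverse `G`. -/
theorem Matrix.hasDerivAt_det_one_sub_smul {m : Type*} [Fintype m] [DecidableEq m]
    {Q G : Matrix m m ℝ} {t : ℝ} (hG : (1 - t • Q) * G = 1) :
    HasDerivAt (fun x : ℝ => (1 - x • Q).det) (-((1 - t • Q).det * (G * Q).trace)) t := by
  have factor (x : ℝ) :
      (1 - x • Q).det = (1 - t • Q).det * (1 + (x - t) • (-(G * Q))).det := by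
    rw [← det_mul, mul_add, mul_smul_comm, mul_neg, ← mul_assoc, hG, one_mul, mul_one]
    congr 1
    module
  rw [funext fun x => (factor x).trans (congrArg _ (det_one_add_smul (x - t) (-(G * Q))))]
  generalize (det (1 + (Polynomial.X : Polynomial ℝ) •
    (-(G * Q)).map Polynomial.C)).divX.divX = p
  have h : HasDerivAt (fun x : ℝ => x - t) 1 t := (hasDerivAt_id t).sub_const t
  have hp := HasDerivAt.comp (h := fun x : ℝ => x - t) t (p.hasDerivAt (t - t)) h
  convert! (((h.const_mul (-(G * Q)).trace).const_add 1).add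
    (hp.mul (h.pow 2))).const_mul (1 - t • Q).det using 1
  simp [trace_neg]

/-- The trace is bounded by the size of the matrix times its norm. -/
theorem Matrix.abs_trace_le {m : Type*} [Fintype m] [DecidableEq m] (A : Matrix m m ℝ) :
    |A.trace| ≤ Fintype.card m * ‖A‖ := by
  have entry (i : m) : |A i i| ≤ ‖A‖ := by
    have h : ‖A i i‖₊ ≤ ‖A‖₊ := by
      rw [linfty_opNNNorm_def]
      exact (Finset.single_le_sum (f := fun j => ‖A i j‖₊) (fun _ _ => zero_le)
        (Finset.mem_univ i)).trans
        (Finset.le_sup (f := fun i => ∑ j, ‖A i j‖₊) (Finset.mem_univ i))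
    exact h
  calc |A.trace| ≤ ∑ i, |A i i| := Finset.abs_sum_le_sum_abs _ _
    _ ≤ ∑ _i : m, ‖A‖ := Finset.sum_le_sum fun i _ => entry i
    _ = Fintype.card m * ‖A‖ := by simp

/-- The series `∑ tᵏ Qᵏ` sums to an inverse of `1 - t • Q`, and term by term to the trace. -/
theorem Matrix.exists_resolvent_of_summable {m : Type*} [Fintype m] [DecidableEq m]
    {Q : Matrix m m ℝ} {t : ℝ} (h : Summable fun k : ℕ => (t • Q) ^ k) :
    ∃ G : Matrix m m ℝ, (1 - t • Q) * G = 1 ∧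
      HasSum (fun k : ℕ => t ^ k * (Q ^ (k + 1)).trace) (G * Q).trace := by
  refine ⟨∑' k : ℕ, (t • Q) ^ k, h.one_sub_mul_tsum_pow, ?_⟩
  have hs := (h.hasSum.mul_right Q).mapL (LinearMap.toContinuousLinearMap (traceLinearMap m ℝ ℝ))
  convert! hs using 2 with k
  simp [smul_pow, pow_succ]

/-- `det (1 - Q) = exp (-∑ tr (Qᵏ) / k)` for a matrix with geometrically decaying powers. -/
theorem Matrix.hasSum_trace_pow_div_and_det_eq {m : Type*} [Fintype m] [DecidableEq m]
    (Q : Matrix m m ℝ) (C r : ℝ) (hr0 : 0 ≤ r) (hr1 : r < 1)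
    (hQ : ∀ k : ℕ, 1 ≤ k → ‖Q ^ k‖ ≤ C * r ^ k) :
    ∃ s : ℝ, HasSum (fun k : ℕ => (Q ^ (k + 1)).trace / (k + 1)) s ∧
      (1 - Q).det = Real.exp (-s) := by
  let K : ℝ := Fintype.card m
  obtain ⟨ρ, hρ1, hrρ⟩ : ∃ ρ : ℝ, 1 < ρ ∧ ρ * r < 1 := by
    refine ⟨2 / (1 + r), ?_, ?_⟩
    · rw [lt_div_iff₀ (by linarith)]; linarith
    · rw [div_mul_eq_mul_div, div_lt_one (by linarith)]; linarith
  have hρ0 : 0 ≤ ρ := by linarith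
  have hgeom : Summable fun k : ℕ => (ρ * r) ^ k :=
    summable_geometric_of_lt_one (by positivity) hrρ
  let a : ℕ → ℝ := fun k => (Q ^ (k + 1)).trace
  have ha (k : ℕ) : |a k| ≤ K * (C * r ^ (k + 1)) :=
    (abs_trace_le _).trans (by gcongr; exact hQ _ (by omega))
  have hball {t : ℝ} (ht : t ∈ Metric.ball (0 : ℝ) ρ) : |t| ≤ ρ := by
    simpa using (Metric.mem_ball.mp ht).le
  have hpow {t : ℝ} (ht : t ∈ Metric.ball (0 : ℝ) ρ) :
      Summable fun k : ℕ => (t • Q) ^ k := by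
    rw [← summable_nat_add_iff 1]
    refine Summable.of_norm_bounded (((summable_nat_add_iff 1).mpr hgeom).mul_left C)
      fun k => ?_
    rw [smul_pow, norm_smul, norm_pow, Real.norm_eq_abs, mul_pow]
    calc |t| ^ (k + 1) * ‖Q ^ (k + 1)‖ ≤ ρ ^ (k + 1) * (C * r ^ (k + 1)) := by
          gcongr
          · exact hball ht
          · exact hQ _ (by omega)
      _ = _ := by ring
  have hg {t : ℝ} (ht : t ∈ Metric.ball (0 : ℝ) ρ) :
      Summable (fun k : ℕ => t ^ (k + 1) * (a k / (k + 1))) ∧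
      HasDerivAt (fun x : ℝ => ∑' k : ℕ, x ^ (k + 1) * (a k / (k + 1)))
        (∑' k : ℕ, t ^ k * a k) t := by
    have hu : Summable fun k : ℕ => K * C * r * (ρ * r) ^ k := hgeom.mul_left _
    have hd (k : ℕ) (y : ℝ) (_ : y ∈ Metric.ball (0 : ℝ) ρ) :
        HasDerivAt (fun x : ℝ => x ^ (k + 1) * (a k / (k + 1))) (y ^ k * a k) y := by
      convert! (hasDerivAt_pow (k + 1) y).mul_const (a k / (k + 1)) using 1
      have : (k : ℝ) + 1 ≠ 0 := by positivity
      push_cast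
      field_simp
    have hb (k : ℕ) (y : ℝ) (hy : y ∈ Metric.ball (0 : ℝ) ρ) :
        ‖y ^ k * a k‖ ≤ K * C * r * (ρ * r) ^ k := by
      rw [norm_mul, norm_pow, Real.norm_eq_abs, Real.norm_eq_abs]
      calc |y| ^ k * |a k| ≤ ρ ^ k * (K * (C * r ^ (k + 1))) := by
            gcongr
            · exact hball hy
            · exact ha k
        _ = _ := by ring
    have h0 : (0 : ℝ) ∈ Metric.ball (0 : ℝ) ρ := by simp; linarith
    have hs0 : Summable fun k : ℕ => (0 : ℝ) ^ (k + 1) * (a k / (k + 1)) := by simp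
    have hconn := (convex_ball (0 : ℝ) ρ).isPreconnected
    exact ⟨summable_of_summable_hasDerivAt_of_isPreconnected hu Metric.isOpen_ball hconn hd hb
        h0 hs0 ht,
      hasDerivAt_tsum_of_isPreconnected hu Metric.isOpen_ball hconn hd hb h0 hs0 ht⟩
  let g : ℝ → ℝ := fun x => ∑' k : ℕ, x ^ (k + 1) * (a k / (k + 1))
  have hF {t : ℝ} (ht : t ∈ Metric.ball (0 : ℝ) ρ) :
      HasDerivAt (fun x : ℝ => (1 - x • Q).det * Real.exp (g x)) 0 t := by
    obtain ⟨G, hG, hsum⟩ := exists_resolvent_of_summable (hpow ht)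
    convert! (hasDerivAt_det_one_sub_smul hG).mul (hg ht).2.exp using 1
    rw [hsum.tsum_eq]
    ring
  have hmem {t : ℝ} (ht : t ∈ Set.Icc (0 : ℝ) 1) : t ∈ Metric.ball (0 : ℝ) ρ := by
    rw [mem_ball_zero_iff, Real.norm_of_nonneg ht.1]
    exact ht.2.trans_lt hρ1
  have hg0 : g 0 = 0 := by simp [g]
  have hg1 : g 1 = ∑' k : ℕ, a k / (k + 1) := by simp [g]
  have hconst : (1 - (1 : ℝ) • Q).det * Real.exp (g 1) =
      (1 - (0 : ℝ) • Q).det * Real.exp (g 0) :=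
    constant_of_has_deriv_right_zero (f := fun x : ℝ => (1 - x • Q).det * Real.exp (g x))
      (fun t ht => (hF (hmem ht)).continuousAt.continuousWithinAt)
      (fun t ht => (hF (hmem (Set.Ico_subset_Icc_self ht))).hasDerivWithinAt)
      1 (Set.right_mem_Icc.mpr zero_le_one)
  rw [hg0, one_smul, zero_smul, sub_zero, det_one, Real.exp_zero, one_mul] at hconst
  have hone := (hg (hmem (Set.right_mem_Icc.mpr zero_le_one))).1
  simp only [one_pow, one_mul] at hone
  refine ⟨g 1, hg1 ▸ hone.hasSum, ?_⟩
  rw [Real.exp_neg]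
  exact eq_inv_of_mul_eq_one_left hconst

end

/-- If `Q` is a real `n×n` matrix with `‖Q^k‖ ≤ C·r^k` for all `k ≥ 1`
(for some `C ≥ 0`, `0 ≤ r < 1`, with a submultiplicative matrix norm), then
`det(I − Q) > 0`, the series `∑_{k≥1} trace(Q^k)/k` converges, and its sum equals
`−log det(I − Q) = log det((I − Q)⁻¹)`. -/
theorem stmt_16 (n : ℕ) (Q : Matrix (Fin n) (Fin n) ℝ)
    (C r : ℝ) (hC : 0 ≤ C) (hr0 : 0 ≤ r) (hr1 : r < 1)
    (hQ : ∀ k : ℕ, 1 ≤ k → ‖Q ^ k‖ ≤ C * r ^ k) :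
    0 < (1 - Q).det ∧
    Summable (fun k : ℕ => (Q ^ (k + 1)).trace / (k + 1)) ∧
    (∑' k : ℕ, (Q ^ (k + 1)).trace / (k + 1)) = -Real.log (1 - Q).det ∧
    (∑' k : ℕ, (Q ^ (k + 1)).trace / (k + 1)) = Real.log ((1 - Q)⁻¹).det := by
  obtain ⟨s, hs, hdet⟩ := hasSum_trace_pow_div_and_det_eq Q C r hr0 hr1 hQ
  rw [det_nonsing_inv, Ring.inverse_eq_inv', Real.log_inv, hs.tsum_eq, hdet, Real.log_exp, neg_neg]
  exact ⟨Real.exp_pos _, hs.summable, rfl, rfl⟩
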